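/- Let g : ℝ → ℝ be smooth and f(x) = g(x²). Then for any x_0, ..., x_n ∈ ℝ: f[x_0, ..., x_n] = ∑_I (∏_{{i-1,i} ⊆ I} (x_{i-1} + x_i)) · g[x_I²], where the sum is over all ordered index sets I = {0 = i_0 < i_1 < ⋯ < i_k = n} with consecutive gaps i_j − i_{j-1} ≤ 2, the product is over pairs of consecutive integers both contained in I, and g[x_I²] denotes g[x_{i_0}², ..., x_{i_k}²]. -/

import Mathlib

open MeasureTheory

/-- The divided difference `f[x₀,…,xₙ]`, defined for `Cⁿ` functions (and
arbitrary, possibly coinciding, points) via Hermite's integral representation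
`f[x₀,…,xₙ] = ∫_{Δₙ} f⁽ⁿ⁾(s₀x₀ + ⋯ + sₙxₙ) dⁿs`; it agrees with the usual
recursive definition on distinct points and extends it continuously. -/
noncomputable def divDiff {E : Type*} [NormedAddCommGroup E] [NormedSpace ℝ E]
    (f : ℝ → E) (n : ℕ) (x : Fin (n + 1) → ℝ) : E :=
  ∫ s in {s : Fin n → ℝ | (∀ i, 0 ≤ s i) ∧ ∑ i, s i ≤ 1},
    iteratedDeriv n f ((1 - ∑ i, s i) * x 0 + ∑ i : Fin n, s i * x i.succ)

/-!
A divided difference at `n + 1` points is one of a divided slope at `n` points: writing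
`Δₐf(u) = (f(u) - f(a)) / (u - a)`, extended by `Δₐf(a) = f'(a)`, one has
`f[x₀,…,xₙ] = (Δ_{x₀}f)[x₁,…,xₙ]`. If `f(u) = g(u²)`, then `Δₐf(u) = (a + u) h(u²)` with
`h = Δ_{a²}g`, and the Leibniz rule for the affine factor `a + u` gives
`f[x₀,…,xₙ] = (x₀ + x₁) (h ∘ sq)[x₁,…,xₙ] + (h ∘ sq)[x₂,…,xₙ]`. The two terms correspond to the
chains whose first gap is `1` and `2`, and `h[x_{i₁}²,…,x_{i_k}²] = g[x₀²,x_{i₁}²,…,x_{i_k}²]`.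
-/

section DSlope

variable {𝕜 E : Type*} [NontriviallyNormedField 𝕜] [NormedAddCommGroup E] [NormedSpace 𝕜 E]

theorem dslope_scomp {g : 𝕜 → E} {h : 𝕜 → 𝕜} {a : 𝕜} (hg : DifferentiableAt 𝕜 g (h a))
    (hh : DifferentiableAt 𝕜 h a) (u : 𝕜) :
    dslope (g ∘ h) a u = dslope h a u • dslope g (h a) (h u) := by
  rcases eq_or_ne u a with rfl | hu
  · simp only [dslope_same, deriv.scomp u hg hh]
  · simp only [dslope_of_ne _ hu, slope_def_module, Function.comp_apply, smul_assoc]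
    rw [sub_smul_dslope]

theorem dslope_fun_smul {c : 𝕜 → 𝕜} {F : 𝕜 → E} {a : 𝕜} (hc : DifferentiableAt 𝕜 c a)
    (hF : DifferentiableAt 𝕜 F a) (u : 𝕜) :
    dslope (fun v => c v • F v) a u = c a • dslope F a u + dslope c a u • F u := by
  rcases eq_or_ne u a with rfl | hu
  · simp only [dslope_same, deriv_fun_smul hc hF]
  · simp only [dslope_of_ne _ hu, slope_def_module, smul_eq_mul]
    module

theorem dslope_const_add_id (c a u : 𝕜) : dslope (fun v => c + v) a u = 1 := by
  rcases eq_or_ne u a with rfl | hu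
  · simp [dslope_same]
  · simp [dslope_of_ne _ hu, slope_def_field, sub_ne_zero.2 hu]

theorem dslope_sq (a u : 𝕜) : dslope (fun v => v ^ 2) a u = a + u := by
  rcases eq_or_ne u a with rfl | hu
  · simp [dslope_same, two_mul]
  · rw [dslope_of_ne _ hu, slope_def_field, div_eq_iff (sub_ne_zero.2 hu)]
    ring

theorem dslope_comp_sq {g : 𝕜 → E} {a : 𝕜} (hg : DifferentiableAt 𝕜 g (a ^ 2)) :
    dslope (fun u => g (u ^ 2)) a = fun u => (a + u) • dslope g (a ^ 2) (u ^ 2) := by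
  funext u
  have h := dslope_scomp (h := fun v => v ^ 2) hg (by fun_prop) u
  rwa [dslope_sq] at h

end DSlope

section SegmentMoment

variable {E : Type*} [NormedAddCommGroup E] [NormedSpace ℝ E]

/-- The `k`-th moment of `φ` along the segment from `a` to `u`. Both `dslope f a` and all of its
derivatives are of this form, which is how divided slopes are differentiated at `u = a`. -/
noncomputable def segmentMoment (φ : ℝ → E) (a : ℝ) (k : ℕ) (u : ℝ) : E :=
  ∫ t in (0 : ℝ)..1, t ^ k • φ (a + t * (u - a))

theorem hasDerivAt_segmentMoment {φ : ℝ → E} (hφ : ContDiff ℝ 1 φ) (a : ℝ) (k : ℕ) (u : ℝ) :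
    HasDerivAt (segmentMoment φ a k) (segmentMoment (deriv φ) a (k + 1) u) u := by
  have hc : Continuous φ := hφ.continuous
  have : Continuous (deriv φ) := hφ.continuous_deriv le_rfl
  obtain ⟨M, hM⟩ := ((isCompact_Icc (a := u - 1) (b := u + 1)).prod
    (isCompact_Icc (a := (0 : ℝ)) (b := 1))).exists_bound_of_continuousOn
    (f := fun p : ℝ × ℝ => p.2 ^ (k + 1) • deriv φ (a + p.2 * (p.1 - a)))
    (by fun_prop)
  refine (intervalIntegral.hasDerivAt_integral_of_dominated_loc_of_deriv_le (bound := fun _ => M)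
    (F := fun u t => t ^ k • φ (a + t * (u - a)))
    (F' := fun u t => t ^ (k + 1) • deriv φ (a + t * (u - a)))
    (Icc_mem_nhds (sub_one_lt u) (lt_add_one u)) (.of_forall fun v => ?_) ?_ ?_
    (.of_forall fun t ht v hv => ?_) intervalIntegrable_const (.of_forall fun t _ v _ => ?_)).2
  · exact Continuous.aestronglyMeasurable (by fun_prop)
  · exact Continuous.intervalIntegrable (by fun_prop) _ _
  · exact Continuous.aestronglyMeasurable (by fun_prop)
  · rw [Set.uIoc_of_le zero_le_one] at ht
    exact hM (v, t) ⟨hv, ht.1.le, ht.2⟩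
  · have hline : HasDerivAt (fun v => a + t * (v - a)) t v := by
      simpa using (((hasDerivAt_id v).sub_const a).const_mul t).const_add a
    have hcomp := (hφ.differentiable one_ne_zero (a + t * (v - a))).hasDerivAt.scomp v hline
    exact (hcomp.const_smul (t ^ k)).congr_deriv (by rw [smul_smul, pow_succ])

theorem deriv_segmentMoment {φ : ℝ → E} (hφ : ContDiff ℝ 1 φ) (a : ℝ) (k : ℕ) :
    deriv (segmentMoment φ a k) = segmentMoment (deriv φ) a (k + 1) :=
  funext fun u => (hasDerivAt_segmentMoment hφ a k u).deriv

theorem contDiff_segmentMoment {n : ℕ} {φ : ℝ → E} (hφ : ContDiff ℝ n φ) (a : ℝ) (k : ℕ) :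
    ContDiff ℝ n (segmentMoment φ a k) := by
  induction n generalizing φ k with
  | zero =>
    have hc : Continuous φ := hφ.continuous
    exact contDiff_zero.2 <| intervalIntegral.continuous_parametric_intervalIntegral_of_continuous'
      (by fun_prop) _ _
  | succ n ih =>
    have hφ₁ : ContDiff ℝ 1 φ := hφ.of_le (by norm_cast; omega)
    push_cast at hφ ⊢
    rw [contDiff_succ_iff_deriv, deriv_segmentMoment hφ₁]
    exact ⟨fun u => (hasDerivAt_segmentMoment hφ₁ a k u).differentiableAt, by simp,
      ih hφ.deriv' (k + 1)⟩

theorem iteratedDeriv_segmentMoment {n : ℕ} {φ : ℝ → E} (hφ : ContDiff ℝ n φ) (a : ℝ) (k : ℕ) :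
    iteratedDeriv n (segmentMoment φ a k) = segmentMoment (iteratedDeriv n φ) a (k + n) := by
  induction n generalizing φ k with
  | zero => simp
  | succ n ih =>
    have hφ₁ : ContDiff ℝ 1 φ := hφ.of_le (by norm_cast; omega)
    rw [iteratedDeriv_succ', deriv_segmentMoment hφ₁, ih (ContDiff.deriv' (mod_cast hφ)),
      iteratedDeriv_succ', add_assoc, add_comm 1]

variable [CompleteSpace E]

theorem dslope_eq_segmentMoment_deriv {f : ℝ → E} (hf : ContDiff ℝ 1 f) (a : ℝ) :
    dslope f a = segmentMoment (deriv f) a 0 := by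
  funext u
  rcases eq_or_ne u a with rfl | hu
  · simp [segmentMoment]
  · have hftc : (u - a) • segmentMoment (deriv f) a 0 u = f u - f a := by
      simpa [segmentMoment] using intervalIntegral.integral_unitInterval_deriv_eq_sub
        (z₀ := a) (z₁ := u - a)
        ((hf.continuous_deriv le_rfl).comp (by fun_prop)).continuousOn
        fun t _ => (hf.differentiable one_ne_zero _).hasDerivAt
    rw [dslope_of_ne _ hu, slope_def_module, ← hftc, inv_smul_smul₀ (sub_ne_zero.2 hu)]

theorem contDiff_dslope {n : ℕ} {f : ℝ → E} (hf : ContDiff ℝ (n + 1) f) (a : ℝ) :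
    ContDiff ℝ n (dslope f a) := by
  rw [dslope_eq_segmentMoment_deriv (hf.of_le (by norm_cast; omega))]
  exact contDiff_segmentMoment hf.deriv' a 0

theorem iteratedDeriv_dslope {n : ℕ} {f : ℝ → E} (hf : ContDiff ℝ (n + 1) f) (a : ℝ) :
    iteratedDeriv n (dslope f a) = segmentMoment (iteratedDeriv (n + 1) f) a n := by
  rw [dslope_eq_segmentMoment_deriv (hf.of_le (by norm_cast; omega)),
    iteratedDeriv_segmentMoment hf.deriv', zero_add, iteratedDeriv_succ']

end SegmentMoment

section CornerSimplex

/-- The standard `n`-simplex `Δₙ` in the coordinates `s₁, …, sₙ`, the barycentric coordinate `s₀`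
being `1 - ∑ i, s i`. -/
def cornerSimplex (n : ℕ) : Set (Fin n → ℝ) :=
  {s | (∀ i, 0 ≤ s i) ∧ ∑ i, s i ≤ 1}

theorem isCompact_cornerSimplex (n : ℕ) : IsCompact (cornerSimplex n) := by
  refine (isCompact_Icc (a := (0 : Fin n → ℝ)) (b := 1)).of_isClosed_subset ?_ ?_
  · simp only [cornerSimplex, Set.ofPred_and, Set.ofPred_forall]
    exact (isClosed_iInter fun i => isClosed_le continuous_const (continuous_apply i)).inter
      (isClosed_le (by fun_prop) continuous_const)
  · rintro s ⟨hs₀, hs₁⟩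
    exact ⟨hs₀, fun i => (Finset.single_le_sum (fun j _ => hs₀ j) (Finset.mem_univ i)).trans hs₁⟩

theorem measurableSet_cornerSimplex (n : ℕ) : MeasurableSet (cornerSimplex n) :=
  (isCompact_cornerSimplex n).isClosed.measurableSet

theorem cons_sub_sum_mem_cornerSimplex_succ {n : ℕ} {t : ℝ} {s : Fin n → ℝ} :
    (Fin.cons (t - ∑ i, s i) s : Fin (n + 1) → ℝ) ∈ cornerSimplex (n + 1) ↔
      (∀ i, 0 ≤ s i) ∧ ∑ i, s i ≤ t ∧ t ≤ 1 := by
  simp only [cornerSimplex, Set.mem_ofPred_eq, Fin.forall_fin_succ, Fin.sum_univ_succ,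
    Fin.cons_zero, Fin.cons_succ, sub_nonneg, sub_add_cancel]
  tauto

theorem nonneg_of_cons_sub_sum_mem_cornerSimplex_succ {n : ℕ} {t : ℝ} {s : Fin n → ℝ}
    (h : (Fin.cons (t - ∑ i, s i) s : Fin (n + 1) → ℝ) ∈ cornerSimplex (n + 1)) : 0 ≤ t := by
  obtain ⟨hs₀, hst, -⟩ := cons_sub_sum_mem_cornerSimplex_succ.1 h
  exact (Finset.sum_nonneg fun i _ => hs₀ i).trans hst

theorem cons_sub_sum_smul_mem_cornerSimplex_succ {n : ℕ} {t : ℝ} (ht : 0 < t) {s : Fin n → ℝ} :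
    (Fin.cons (t - ∑ i, (t • s) i) (t • s) : Fin (n + 1) → ℝ) ∈ cornerSimplex (n + 1) ↔
      t ≤ 1 ∧ s ∈ cornerSimplex n := by
  rw [cons_sub_sum_mem_cornerSimplex_succ]
  simp only [cornerSimplex, Set.mem_ofPred_eq, Pi.smul_apply, smul_eq_mul,
    mul_nonneg_iff_of_pos_left ht, ← Finset.mul_sum, mul_le_iff_le_one_right ht]
  tauto

theorem measurePreserving_cons_sub_sum (n : ℕ) :
    MeasurePreserving
      (fun p : (Fin n → ℝ) × ℝ => (Fin.cons (p.2 - ∑ i, p.1 i) p.1 : Fin (n + 1) → ℝ)) := by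
  have hshear : MeasurePreserving (fun p : (Fin n → ℝ) × ℝ => (p.1, p.2 - ∑ i, p.1 i)) :=
    (MeasurePreserving.id volume).skew_product (g := fun (s : Fin n → ℝ) t => t - ∑ i, s i)
      (by fun_prop) (.of_forall fun s => (measurePreserving_sub_right volume _).map_eq)
  simpa [Function.comp_def, Fin.insertNthEquiv] using!
    ((volume_preserving_piFinSuccAbove (fun _ : Fin (n + 1) => ℝ) 0).symm.comp
      Measure.measurePreserving_swap).comp hshear

variable {E : Type*} [NormedAddCommGroup E] [NormedSpace ℝ E]

theorem integral_eq_integral_integral_cons_sub_sum {n : ℕ} {G : (Fin (n + 1) → ℝ) → E}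
    (hG : Integrable G) :
    ∫ s, G s = ∫ t, ∫ s : Fin n → ℝ, G (Fin.cons (t - ∑ i, s i) s) := by
  have hmp := measurePreserving_cons_sub_sum n
  rw [← hmp.map_eq, integral_map hmp.aemeasurable (by rw [hmp.map_eq]; exact hG.1)]
  exact integral_prod_symm _ (hmp.integrable_comp_of_integrable hG)

-- Slice by `t = ∑ i, s i`: the slice is a copy of the simplex one dimension lower, scaled by `t`.
theorem setIntegral_cornerSimplex_succ {n : ℕ} {G : (Fin (n + 1) → ℝ) → E}
    (hG : IntegrableOn G (cornerSimplex (n + 1))) :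
    ∫ s in cornerSimplex (n + 1), G s =
      ∫ t in (0 : ℝ)..1, t ^ n •
        ∫ s in cornerSimplex n, G (Fin.cons (t - ∑ i, (t • s) i) (t • s)) := by
  have hmeas := measurableSet_cornerSimplex (n + 1)
  rw [← integral_indicator hmeas,
    integral_eq_integral_integral_cons_sub_sum (hG.integrable_indicator hmeas),
    intervalIntegral.integral_of_le zero_le_one, ← integral_indicator measurableSet_Ioc]
  refine integral_congr_ae ?_
  filter_upwards [compl_mem_ae_iff.2 (measure_singleton (0 : ℝ))] with t ht
  rcases lt_or_gt_of_ne (show t ≠ 0 from ht) with ht | ht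
  · rw [Set.indicator_of_notMem (fun h => h.1.not_gt ht)]
    refine integral_eq_zero_of_ae (.of_forall fun s => Set.indicator_of_notMem (fun h => ?_) _)
    exact (nonneg_of_cons_sub_sum_mem_cornerSimplex_succ h).not_gt ht
  · have hscale := Measure.integral_comp_smul volume (fun s : Fin n → ℝ =>
      (cornerSimplex (n + 1)).indicator G (Fin.cons (t - ∑ i, s i) s)) t
    rw [Module.finrank_fin_fun, abs_of_pos (by positivity),
      eq_inv_smul_iff₀ (by positivity)] at hscale
    rw [← hscale]
    by_cases ht₁ : t ≤ 1
    · rw [Set.indicator_of_mem (Set.mem_Ioc.2 ⟨ht, ht₁⟩),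
        ← integral_indicator (measurableSet_cornerSimplex n)]
      classical
      congr! 3
      exact if_congr ((cons_sub_sum_smul_mem_cornerSimplex_succ ht).trans (and_iff_right ht₁))
        rfl rfl
    · simp [Set.indicator, cons_sub_sum_smul_mem_cornerSimplex_succ ht, ht₁, -Pi.smul_apply]

end CornerSimplex

section DivDiff

variable {E : Type*} [NormedAddCommGroup E] [NormedSpace ℝ E] {n : ℕ}

/-- The combination `s₀x₀ + ⋯ + sₙxₙ` in Hermite's formula, with `s₀ = 1 - ∑ i, s i`. -/
def barycenter (x : Fin (n + 1) → ℝ) (s : Fin n → ℝ) : ℝ :=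
  (1 - ∑ i, s i) * x 0 + ∑ i, s i * x i.succ

@[fun_prop]
theorem continuous_barycenter (x : Fin (n + 1) → ℝ) : Continuous (barycenter x) := by
  unfold barycenter
  fun_prop

theorem barycenter_cons_sub_sum_smul (x : Fin (n + 2) → ℝ) (t : ℝ) (s : Fin n → ℝ) :
    barycenter x (Fin.cons (t - ∑ i, (t • s) i) (t • s)) =
      x 0 + t * (barycenter (Fin.tail x) s - x 0) := by
  simp only [barycenter, Fin.sum_univ_succ, Fin.cons_zero, Fin.cons_succ, Pi.smul_apply,
    smul_eq_mul, mul_assoc, ← Finset.mul_sum, Fin.tail]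
  ring

theorem divDiff_eq_setIntegral (f : ℝ → E) (x : Fin (n + 1) → ℝ) :
    divDiff f n x = ∫ s in cornerSimplex n, iteratedDeriv n f (barycenter x s) := rfl

theorem setIntegral_cornerSimplex_succ_comp_barycenter {φ : ℝ → E} (hφ : Continuous φ)
    (x : Fin (n + 2) → ℝ) :
    ∫ s in cornerSimplex (n + 1), φ (barycenter x s) =
      ∫ s in cornerSimplex n, ∫ t in (0 : ℝ)..1,
        t ^ n • φ (x 0 + t * (barycenter (Fin.tail x) s - x 0)) := by
  have hintegrable : IntegrableOn (fun p : ℝ × (Fin n → ℝ) =>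
      p.1 ^ n • φ (x 0 + p.1 * (barycenter (Fin.tail x) p.2 - x 0)))
      (Set.Icc 0 1 ×ˢ cornerSimplex n) (volume.prod volume) :=
    ContinuousOn.integrableOn_compact (isCompact_Icc.prod (isCompact_cornerSimplex n))
      (by fun_prop)
  rw [setIntegral_cornerSimplex_succ
    (ContinuousOn.integrableOn_compact (isCompact_cornerSimplex _) (by fun_prop))]
  simp only [barycenter_cons_sub_sum_smul, ← integral_smul]
  refine intervalIntegral_integral_swap ?_
  rw [Set.uIoc_of_le zero_le_one, Measure.prod_restrict]
  exact hintegrable.mono_set (Set.prod_mono Set.Ioc_subset_Icc_self subset_rfl)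

theorem integrableOn_iteratedDeriv_comp_barycenter {f : ℝ → E} (hf : ContDiff ℝ n f)
    (x : Fin (n + 1) → ℝ) :
    IntegrableOn (fun s => iteratedDeriv n f (barycenter x s)) (cornerSimplex n) :=
  ContinuousOn.integrableOn_compact (isCompact_cornerSimplex n)
    ((hf.continuous_iteratedDeriv' n).comp (continuous_barycenter x)).continuousOn

theorem divDiff_fun_add {f h : ℝ → E} (hf : ContDiff ℝ n f) (hh : ContDiff ℝ n h)
    (x : Fin (n + 1) → ℝ) :
    divDiff (fun u => f u + h u) n x = divDiff f n x + divDiff h n x := by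
  simp only [divDiff_eq_setIntegral, iteratedDeriv_fun_add hf.contDiffAt hh.contDiffAt]
  exact integral_add (integrableOn_iteratedDeriv_comp_barycenter hf x)
    (integrableOn_iteratedDeriv_comp_barycenter hh x)

theorem divDiff_fun_const_smul (c : ℝ) (f : ℝ → E) (x : Fin (n + 1) → ℝ) :
    divDiff (fun u => c • f u) n x = c • divDiff f n x := by
  simp only [divDiff_eq_setIntegral, iteratedDeriv_fun_const_smul_field, integral_smul]

theorem divDiff_zero [CompleteSpace E] (f : ℝ → E) (x : Fin 1 → ℝ) : divDiff f 0 x = f (x 0) := by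
  simp [divDiff, Measure.real, volume_pi]

end DivDiff

section Recursion

variable {E : Type*} [NormedAddCommGroup E] [NormedSpace ℝ E] [CompleteSpace E] {n : ℕ}

theorem divDiff_succ {f : ℝ → E} (hf : ContDiff ℝ (n + 1) f) (x : Fin (n + 2) → ℝ) :
    divDiff f (n + 1) x = divDiff (dslope f (x 0)) n (Fin.tail x) := by
  rw [divDiff_eq_setIntegral, divDiff_eq_setIntegral, iteratedDeriv_dslope hf]
  exact setIntegral_cornerSimplex_succ_comp_barycenter
    (ContDiff.continuous_iteratedDeriv' (n + 1) (mod_cast hf)) x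

theorem divDiff_fun_const_add_smul {F : ℝ → E} (hF : ContDiff ℝ (n + 1) F) (c : ℝ)
    (x : Fin (n + 2) → ℝ) :
    divDiff (fun u => (c + u) • F u) (n + 1) x =
      (c + x 0) • divDiff F (n + 1) x + divDiff F n (Fin.tail x) := by
  have hslope : dslope (fun u => (c + u) • F u) (x 0) =
      fun u => (c + x 0) • dslope F (x 0) u + F u := by
    funext u
    rw [dslope_fun_smul (by fun_prop) (hF.differentiable (by simp) _), dslope_const_add_id,
      one_smul]
  rw [divDiff_succ (by fun_prop), hslope,
    divDiff_fun_add ((contDiff_dslope hF _).const_smul _) (hF.of_le (by norm_cast; omega)),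
    divDiff_fun_const_smul, ← divDiff_succ hF]

theorem divDiff_comp_sq_one {g : ℝ → E} (hg : ContDiff ℝ 1 g) (x : Fin 2 → ℝ) :
    divDiff (fun u => g (u ^ 2)) 1 x =
      (x 0 + x 1) • divDiff (fun u => dslope g (x 0 ^ 2) (u ^ 2)) 0 (Fin.tail x) := by
  rw [divDiff_succ (by norm_num; fun_prop), dslope_comp_sq (hg.differentiable one_ne_zero _),
    divDiff_zero, divDiff_zero]
  rfl

theorem divDiff_comp_sq_add_two {g : ℝ → E} (hg : ContDiff ℝ (n + 2) g) (x : Fin (n + 3) → ℝ) :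
    divDiff (fun u => g (u ^ 2)) (n + 2) x =
      (x 0 + x 1) • divDiff (fun u => dslope g (x 0 ^ 2) (u ^ 2)) (n + 1) (Fin.tail x) +
        divDiff (fun u => dslope g (x 0 ^ 2) (u ^ 2)) n (Fin.tail (Fin.tail x)) := by
  have hg' : ContDiff ℝ ((n + 1 : ℕ) + 1) g := by exact_mod_cast hg
  have hslope : ContDiff ℝ (n + 1) (fun u => dslope g (x 0 ^ 2) (u ^ 2)) := by
    exact_mod_cast (contDiff_dslope hg' _).comp (contDiff_id.pow 2)
  rw [divDiff_succ (f := fun u => g (u ^ 2)) (hg'.comp (contDiff_id.pow 2)),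
    dslope_comp_sq (hg.differentiable (by simp) _), divDiff_fun_const_add_smul hslope]
  rfl

end Recursion

section Walks

variable {V : Type*} [Fintype V] [DecidableEq V] (r : V → V → Prop) [DecidableRel r]

/-- The walks `c 0, …, c k` from `a` to `z` in the directed graph with edge relation `r`. -/
def walks (k : ℕ) (a z : V) : Finset (Fin (k + 1) → V) :=
  {c | c 0 = a ∧ c (Fin.last k) = z ∧ ∀ j : Fin k, r (c j.castSucc) (c j.succ)}

variable {r}

theorem mem_walks {k : ℕ} {a z : V} {c : Fin (k + 1) → V} :
    c ∈ walks r k a z ↔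
      c 0 = a ∧ c (Fin.last k) = z ∧ ∀ j : Fin k, r (c j.castSucc) (c j.succ) :=
  Finset.mem_filter_univ _

theorem walks_zero (a z : V) : walks r 0 a z = if a = z then {fun _ => a} else ∅ := by
  ext c
  split_ifs with h
  · simp [mem_walks, funext_iff, ← h]
  · simp only [mem_walks, Finset.notMem_empty, iff_false]
    rintro ⟨rfl, hz, -⟩
    exact h hz

theorem cons_mem_walks_succ {k : ℕ} {a z : V} {c : Fin (k + 1) → V} :
    (Fin.cons a c : Fin (k + 2) → V) ∈ walks r (k + 1) a z ↔
      r a (c 0) ∧ c ∈ walks r k (c 0) z := by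
  simp only [mem_walks, Fin.forall_fin_succ (n := k), Fin.cons_zero, Fin.cons_succ,
    ← Fin.succ_last, Fin.castSucc_zero, Fin.castSucc_succ, true_and]
  tauto

theorem sum_walks_succ {M : Type*} [AddCommMonoid M] {k : ℕ} (a z : V)
    (F : (Fin (k + 2) → V) → M) :
    ∑ c ∈ walks r (k + 1) a z, F c =
      ∑ b with r a b, ∑ c ∈ walks r k b z, F (Fin.cons a c) := by
  have hcons {c : Fin (k + 2) → V} (hc : c ∈ walks r (k + 1) a z) :
      Fin.cons a (Fin.tail c) = c := by
    rw [← (mem_walks.1 hc).1, Fin.cons_self_tail]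
  rw [Finset.sum_sigma']
  refine Finset.sum_nbij' (fun c => ⟨Fin.tail c 0, Fin.tail c⟩) (fun p => Fin.cons a p.2) ?_ ?_
    (fun c hc => hcons hc) ?_ fun c hc => by rw [hcons hc]
  · intro c hc
    rw [← hcons hc] at hc
    simpa using cons_mem_walks_succ.1 hc
  · rintro ⟨b, c⟩ hc
    obtain ⟨hab, hc⟩ := Finset.mem_sigma.1 hc
    obtain rfl : c 0 = b := (mem_walks.1 hc).1
    exact cons_mem_walks_succ.2 ⟨(Finset.mem_filter.1 hab).2, hc⟩
  · rintro ⟨b, c⟩ hc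
    obtain rfl : c 0 = b := (mem_walks.1 (Finset.mem_sigma.1 hc).2).1
    rfl

end Walks

section ChainSum

variable {E : Type*} [NormedAddCommGroup E] [NormedSpace ℝ E] {n : ℕ}

/-- The relation between consecutive elements of a chain with gaps at most `2`. -/
abbrev GapLeTwo (a b : Fin (n + 1)) : Prop := a < b ∧ b.val ≤ a.val + 2

/-- The factor that a gap `a < b` of a chain contributes to the product over the pairs of
consecutive integers in the chain. -/
noncomputable def gapWeight (x : Fin (n + 1) → ℝ) (a b : Fin (n + 1)) : ℝ :=
  if b.val = a.val + 1 then x a + x b else 1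

/-- The part of the sum `∑_I (∏_{{i-1,i} ⊆ I} (x_{i-1} + x_i)) g[x_I²]` with a fixed number `k` of
gaps, over chains `I = {a = i₀ < ⋯ < i_k = n}` starting at `a` instead of `0`. -/
noncomputable def chainSum (x : Fin (n + 1) → ℝ) (k : ℕ) (a : Fin (n + 1)) (g : ℝ → E) : E :=
  ∑ c ∈ walks GapLeTwo k a (Fin.last n),
    (∏ j : Fin k, gapWeight x (c j.castSucc) (c j.succ)) • divDiff g k (fun j => x (c j) ^ 2)

theorem sum_gapWeight_smul_last (x : Fin (n + 1) → ℝ) (T : Fin (n + 1) → E) :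
    ∑ b with GapLeTwo (Fin.last n) b, gapWeight x (Fin.last n) b • T b = 0 :=
  Finset.sum_eq_zero fun b hb =>
    absurd (Finset.mem_filter.1 hb).2.1 (Fin.le_last b).not_gt

theorem sum_gapWeight_smul_of_add_one_eq_last (x : Fin (n + 1) → ℝ) (T : Fin (n + 1) → E)
    {a : Fin (n + 1)} (ha : a.val + 1 = n) :
    ∑ b with GapLeTwo a b, gapWeight x a b • T b = (x a + x (Fin.last n)) • T (Fin.last n) := by
  have hsteps : ({b | GapLeTwo a b} : Finset (Fin (n + 1))) = {Fin.last n} := by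
    ext b
    simp only [GapLeTwo, Finset.mem_filter_univ, Finset.mem_singleton, Fin.ext_iff, Fin.val_last]
    omega
  rw [hsteps, Finset.sum_singleton, gapWeight, Fin.val_last, if_pos ha.symm]

theorem sum_gapWeight_smul (x : Fin (n + 1) → ℝ) (T : Fin (n + 1) → E) {a b c : Fin (n + 1)}
    (hb : b.val = a.val + 1) (hc : c.val = a.val + 2) :
    ∑ d with GapLeTwo a d, gapWeight x a d • T d = (x a + x b) • T b + T c := by
  have hsteps : ({d | GapLeTwo a d} : Finset (Fin (n + 1))) = {b, c} := by
    ext d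
    simp only [GapLeTwo, Finset.mem_filter_univ, Finset.mem_singleton, Finset.mem_insert]
    omega
  rw [hsteps, Finset.sum_pair (by omega), gapWeight, if_pos hb, gapWeight, if_neg (by omega),
    one_smul]

variable [CompleteSpace E]

theorem chainSum_zero (x : Fin (n + 1) → ℝ) (g : ℝ → E) (a : Fin (n + 1)) :
    chainSum x 0 a g = if a = Fin.last n then g (x a ^ 2) else 0 := by
  rw [chainSum, walks_zero]
  split_ifs <;> simp [divDiff_zero]

theorem chainSum_succ {k : ℕ} {g : ℝ → E} (hg : ContDiff ℝ (k + 1) g) (x : Fin (n + 1) → ℝ)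
    (a : Fin (n + 1)) :
    chainSum x (k + 1) a g =
      ∑ b with GapLeTwo a b, gapWeight x a b • chainSum x k b (dslope g (x a ^ 2)) := by
  rw [chainSum, sum_walks_succ]
  refine Finset.sum_congr rfl fun b _ => ?_
  rw [chainSum, Finset.smul_sum]
  refine Finset.sum_congr rfl fun c hc => ?_
  rw [Fin.prod_univ_succ, divDiff_succ hg, smul_smul, ← (mem_walks.1 hc).1]
  rfl

theorem sum_chainSum_succ {p : ℕ} {g : ℝ → E} (hg : ContDiff ℝ (p + 1) g)
    (x : Fin (n + 1) → ℝ) (a : Fin (n + 1)) :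
    ∑ k ∈ Finset.range (p + 2), chainSum x k a g =
      chainSum x 0 a g + ∑ b with GapLeTwo a b,
        gapWeight x a b • ∑ k ∈ Finset.range (p + 1), chainSum x k b (dslope g (x a ^ 2)) := by
  simp only [Finset.smul_sum]
  rw [Finset.sum_range_succ', add_comm, Finset.sum_comm]
  congr 1
  refine Finset.sum_congr rfl fun k hk => chainSum_succ (hg.of_le ?_) x a
  have := Finset.mem_range.1 hk
  norm_cast

-- The range stops at `p` rather than at `m` so that the two tails of `y`, of different lengths, are
-- summed over the same range; no chain from `a` has more than `m` gaps.
theorem divDiff_comp_sq_eq_sum_chainSum {p m : ℕ} (hmp : m ≤ p) {g : ℝ → E}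
    (hg : ContDiff ℝ p g) (x : Fin (n + 1) → ℝ) {a : Fin (n + 1)} (ha : a.val + m = n)
    (y : Fin (m + 1) → ℝ) (hy : ∀ j (i : Fin (n + 1)), i.val = a.val + j.val → y j = x i) :
    divDiff (fun u => g (u ^ 2)) m y = ∑ k ∈ Finset.range (p + 1), chainSum x k a g := by
  induction p generalizing m g a with
  | zero =>
    obtain rfl : m = 0 := Nat.le_zero.1 hmp
    obtain rfl : a = Fin.last n := Fin.ext ha
    simp [divDiff_zero, chainSum_zero, hy 0 (Fin.last n) rfl]
  | succ p ih =>
    push_cast at hg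
    have hy₀ : y 0 = x a := hy 0 a rfl
    have hh : ContDiff ℝ p (dslope g (x a ^ 2)) := contDiff_dslope hg _
    rw [sum_chainSum_succ hg, chainSum_zero]
    match m with
    | 0 =>
      obtain rfl : a = Fin.last n := Fin.ext ha
      rw [sum_gapWeight_smul_last, divDiff_zero, hy₀, if_pos rfl, add_zero]
    | 1 =>
      have ha' : a ≠ Fin.last n := fun h => by simp [h] at ha
      rw [if_neg ha', zero_add, sum_gapWeight_smul_of_add_one_eq_last x _ ha,
        divDiff_comp_sq_one (hg.of_le (by norm_cast)), hy₀, hy 1 (Fin.last n) ha.symm,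
        ih (Nat.zero_le p) hh (a := Fin.last n) rfl (Fin.tail y) fun j i hi =>
          hy j.succ i (by grind)]
    | m + 2 =>
      have ha' : a ≠ Fin.last n := fun h => by simp [h] at ha
      let b : Fin (n + 1) := ⟨a + 1, by omega⟩
      let c : Fin (n + 1) := ⟨a + 2, by omega⟩
      rw [if_neg ha', zero_add, sum_gapWeight_smul x _ (b := b) (c := c) rfl rfl,
        divDiff_comp_sq_add_two (hg.of_le (by norm_cast)), hy₀, hy 1 b rfl,
        ih (by omega) hh (a := b) (by grind) (Fin.tail y) fun j i hi =>
          hy j.succ i (by grind),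
        ih (by omega) hh (a := c) (by grind) (Fin.tail (Fin.tail y)) fun j i hi =>
          hy j.succ.succ i (by grind)]

end ChainSum

theorem divDiff_g_of_sq_general {E : Type*} [NormedAddCommGroup E] [NormedSpace ℝ E]
    [CompleteSpace E] (n : ℕ) (g : ℝ → E) (hg : ContDiff ℝ n g) (x : Fin (n + 1) → ℝ) :
    divDiff (fun u : ℝ => g (u ^ 2)) n x =
      ∑ k ∈ Finset.range (n + 1),
        ∑ c ∈ Finset.univ.filter (fun c : Fin (k + 1) → Fin (n + 1) =>
            c 0 = 0 ∧ c (Fin.last k) = Fin.last n ∧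
              ∀ j : Fin k, c j.castSucc < c j.succ ∧
                (c j.succ).val ≤ (c j.castSucc).val + 2),
          (∏ j : Fin k,
              if (c j.succ).val = (c j.castSucc).val + 1 then
                x (c j.castSucc) + x (c j.succ)
              else 1) •
            divDiff g k (fun j => x (c j) ^ 2) := by
  refine divDiff_comp_sq_eq_sum_chainSum le_rfl hg x (a := 0) (zero_add n) x ?_
  exact fun j i hij => congrArg x (Fin.ext (by simpa using hij.symm))

/-- For `f(x) = g(x²)`:
`f[x₀,…,xₙ] = ∑_I (∏_{{i-1,i} ⊆ I} (x_{i-1} + x_i)) g[x_I²]`, the sum being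
over all chains `I = {0 = i₀ < i₁ < ⋯ < i_k = n}` with consecutive gaps at
most `2`, and the product over pairs of consecutive integers contained in `I`. -/
theorem divDiff_g_of_sq (n : ℕ) (g : ℝ → ℝ) (hg : ContDiff ℝ (⊤ : ℕ∞) g)
    (x : Fin (n + 1) → ℝ) :
    divDiff (fun u : ℝ => g (u ^ 2)) n x =
      ∑ k ∈ Finset.range (n + 1),
        ∑ c ∈ Finset.univ.filter (fun c : Fin (k + 1) → Fin (n + 1) =>
            c 0 = 0 ∧ c (Fin.last k) = Fin.last n ∧
              ∀ j : Fin k, c j.castSucc < c j.succ ∧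
                (c j.succ).val ≤ (c j.castSucc).val + 2),
          (∏ j : Fin k,
              if (c j.succ).val = (c j.castSucc).val + 1 then
                x (c j.castSucc) + x (c j.succ)
              else 1) *
            divDiff g k (fun j => x (c j) ^ 2) := by
  simpa only [smul_eq_mul] using
    divDiff_g_of_sq_general n g (hg.of_le (mod_cast le_top)) x
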